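/- arXiv:0905.3846 — 2 statements merged into one kernel-verified Lean document; each statement's English description precedes it below -/
import Mathlib

section
/- Let Q be a finite quasigroup and suppose the track φ_k is special. Then α(k) = k for every automorphism α of Q. -/
/-! An automorphism `α` carries the equation `x * φ i x = i` to `α x * α (φ i x) = α i`, so it
conjugates the track of `i` to the track of `α i`. A track conjugate to no other track must
therefore be indexed by a fixed point of `α`. -/

/-- `σ` is the track (right middle translation) of `i`. Bijectivity is not part of the definition:
in a quasigroup it is automatic. -/
def IsTrack {Q : Type*} [Mul Q] (i : Q) (σ : Q → Q) : Prop :=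
  ∀ x, x * σ x = i

namespace IsTrack

theorem semiconj {Q R : Type*} [Mul Q] [Mul R] [IsLeftCancelMul R] {i : Q} {σ : Q → Q} {τ : R → R}
    (f : Q →ₙ* R) (hσ : IsTrack i σ) (hτ : IsTrack (f i) τ) : Function.Semiconj f σ τ := fun x ↦
  mul_left_cancel <| calc
    f x * f (σ x) = f (x * σ x) := (map_mul f x (σ x)).symm
    _ = f i := congrArg f (hσ x)
    _ = f x * τ (f x) := (hτ (f x)).symm

theorem isConj {Q : Type*} [Mul Q] [IsLeftCancelMul Q] {i : Q} {σ τ : Equiv.Perm Q}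
    (α : Q ≃* Q) (hσ : IsTrack i σ) (hτ : IsTrack (α i) τ) : IsConj σ τ :=
  isConj_iff.2 ⟨α.toEquiv, mul_inv_eq_iff_eq_mul.2 <| Equiv.ext <| hσ.semiconj (α : Q →ₙ* Q) hτ⟩

end IsTrack

theorem special_track_fixed_general {Q : Type*} [Mul Q] [IsLeftCancelMul Q]
    {φ : Q → Equiv.Perm Q} (hφ : ∀ i, IsTrack i (φ i)) {k : Q}
    (hspec : ∀ i, i ≠ k → ¬IsConj (φ i) (φ k)) (α : Q ≃* Q) : α k = k := by
  by_contra hne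
  exact hspec (α k) hne ((hφ k).isConj α (hφ (α k))).symm

/-- If the track `φ k` of a finite quasigroup is special, then
`α k = k` for every automorphism `α`. -/
theorem special_track_fixed {Q : Type*} [Fintype Q] [DecidableEq Q] [Mul Q]
    (hL : ∀ a : Q, Function.Bijective (fun x : Q => a * x))
    (hR : ∀ a : Q, Function.Bijective (fun x : Q => x * a))
    (φ : Q → Equiv.Perm Q)
    (hφ : ∀ i x : Q, x * φ i x = i)
    (k : Q)
    (hspec : ∀ i : Q, i ≠ k → (φ i).cycleType ≠ (φ k).cycleType)
    (α : Equiv.Perm Q)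
    (hα : ∀ x y : Q, α (x * y) = α x * α y) :
    α k = k := by
  have : IsLeftCancelMul Q := ⟨fun a ↦ (hL a).injective⟩
  exact special_track_fixed_general hφ
    (fun i hi h ↦ hspec i hi (Equiv.Perm.isConj_iff_cycleType_eq.1 h)) (MulEquiv.mk' α hα)
end

section
/- Let Q be a finite quasigroup and suppose the part Φ_i is special, i.e. Sp(Φ_i) ≠ Sp(Φ_k) for all k ≠ i. Then γ(i) = i for every autotopism (α, β, γ) of Q. -/
/-!
A homotopism `(α, β, γ)` carries the tracks `φ i` of its source to the tracks `ψ i` of its target: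
`ψ (γ i) (α x)` and `β (φ i x)` both solve `α x * y = γ i` for `y`. In a spin the two occurrences
of `α` cancel, so `β` alone intertwines the spin of `(i, j)` with that of `(γ i, γ j)`. When `β` and
`γ` are bijective, the parts of `i` and `γ i` therefore have the same spectrum.
-/

open Function Equiv

section Spectrum

variable {ι κ X Y : Type*}

/-- The spin `φ i ∘ (φ j)⁻¹` of two members of a family of permutations; the family of interest is
that of the tracks of a quasigroup. -/
def spin (φ : ι → Perm X) (i j : ι) : Perm X :=
  φ i * (φ j)⁻¹

/-- The spectrum of the part of `i`: the multiset of cycle types of the spins of `(i, j)` for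
`j ≠ i`. Fixed points are not recorded, as usual for `Equiv.Perm.cycleType`. -/
def spinSpectrum [Fintype ι] [DecidableEq ι] [Fintype X] [DecidableEq X]
    (φ : ι → Perm X) (i : ι) : Multiset (Multiset ℕ) :=
  (Finset.univ.filter fun j => j ≠ i).val.map fun j => (spin φ i j).cycleType

theorem cycleType_eq_of_semiconj [Fintype X] [DecidableEq X] [Fintype Y] [DecidableEq Y]
    {σ : Perm X} {τ : Perm Y} {e : X ≃ Y} (h : Semiconj e σ τ) :
    τ.cycleType = σ.cycleType := by
  -- `extendDomain` along a trivial subtype transports cycle types between different types.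
  let f : X ≃ {_y : Y // True} := e.trans (Equiv.subtypeUnivEquiv fun _ => trivial).symm
  have hτ : τ = σ.extendDomain f := by
    ext y
    obtain ⟨x, rfl⟩ := e.surjective y
    calc
      τ (e x) = e (σ x) := (h x).symm
      _ = σ.extendDomain f (e x) := (σ.extendDomain_apply_image f x).symm
  rw [hτ, Perm.cycleType_extendDomain]

theorem spinSpectrum_eq_of_cycleType_spin_eq
    [Fintype ι] [DecidableEq ι] [Fintype κ] [DecidableEq κ]
    [Fintype X] [DecidableEq X] [Fintype Y] [DecidableEq Y]
    {φ : ι → Perm X} {ψ : κ → Perm Y} (γ : ι ≃ κ) (i : ι)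
    (h : ∀ j, (spin ψ (γ i) (γ j)).cycleType = (spin φ i j).cycleType) :
    spinSpectrum ψ (γ i) = spinSpectrum φ i := by
  have reindex : (Finset.univ.filter fun k => k ≠ γ i) =
      (Finset.univ.filter fun j => j ≠ i).map γ.toEmbedding := by
    ext k
    obtain ⟨j, rfl⟩ := γ.surjective k
    simp
  rw [spinSpectrum, reindex, Finset.map_val, Multiset.map_map]
  exact Multiset.map_congr rfl fun j _ => h j

end Spectrum

section Tracks

variable {Q R : Type*} [Mul Q] [Mul R]

/-- `φ i` is the track (right middle translation) of `i`, for every `i`. -/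
def IsTrackFamily (φ : Q → Perm Q) : Prop :=
  ∀ i x, x * φ i x = i

/-- A homotopism `(α, β, γ)` of magmas; an autotopism is a homotopism from a quasigroup to itself
with bijective components. -/
def IsHomotopism (α β γ : Q → R) : Prop :=
  ∀ x y, γ (x * y) = α x * β y

namespace IsHomotopism

variable [IsLeftCancelMul R] {φ : Q → Perm Q} {ψ : R → Perm R}

theorem track_apply {α β γ : Q → R} (h : IsHomotopism α β γ)
    (hφ : IsTrackFamily φ) (hψ : IsTrackFamily ψ) (i x : Q) :
    ψ (γ i) (α x) = β (φ i x) := by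
  apply mul_left_cancel (a := α x)
  rw [hψ, ← h, hφ]

theorem semiconj_spin {α β γ : Q → R} (h : IsHomotopism α β γ)
    (hφ : IsTrackFamily φ) (hψ : IsTrackFamily ψ) (i j : Q) :
    Semiconj β (spin φ i j) (spin ψ (γ i) (γ j)) := by
  intro y
  obtain ⟨x, rfl⟩ := (φ j).surjective y
  simp only [spin, Perm.mul_apply, Perm.inv_def, symm_apply_apply, ← h.track_apply hφ hψ]

theorem spinSpectrum_apply [Fintype Q] [DecidableEq Q] [Fintype R] [DecidableEq R]
    {α : Q → R} {β γ : Q ≃ R} (h : IsHomotopism α β γ)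
    (hφ : IsTrackFamily φ) (hψ : IsTrackFamily ψ) (i : Q) :
    spinSpectrum ψ (γ i) = spinSpectrum φ i :=
  spinSpectrum_eq_of_cycleType_spin_eq γ i fun j =>
    cycleType_eq_of_semiconj (h.semiconj_spin hφ hψ i j)

end IsHomotopism

end Tracks

/-- If the part `Φ i` of a finite quasigroup is special, i.e. its
spectrum (the multiset of cycle types of the spins `φ i ∘ (φ j)⁻¹` over `j ≠ i`)
differs from the spectrum of `Φ k` for all `k ≠ i`, then `γ i = i` for every
autotopism `(α, β, γ)`. -/
theorem special_part_fixed {Q : Type*} [Fintype Q] [DecidableEq Q] [Mul Q]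
    (hL : ∀ a : Q, Function.Bijective (fun x : Q => a * x))
    (hR : ∀ a : Q, Function.Bijective (fun x : Q => x * a))
    (φ : Q → Equiv.Perm Q)
    (hφ : ∀ i x : Q, x * φ i x = i)
    (i : Q)
    (hspec : ∀ k : Q, k ≠ i →
      (Finset.univ.filter (fun j : Q => j ≠ i)).val.map
        (fun j => (φ i * (φ j)⁻¹).cycleType) ≠
      (Finset.univ.filter (fun j : Q => j ≠ k)).val.map
        (fun j => (φ k * (φ j)⁻¹).cycleType))
    (α β γ : Equiv.Perm Q)
    (hat : ∀ x y : Q, γ (x * y) = α x * β y) :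
    γ i = i := by
  have : IsLeftCancelMul Q := ⟨fun a => (hL a).injective⟩
  have hspectrum : spinSpectrum φ (γ i) = spinSpectrum φ i :=
    IsHomotopism.spinSpectrum_apply (α := α) (β := β) hat hφ hφ i
  by_contra hne
  exact hspec (γ i) hne hspectrum.symm
end
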